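/- arXiv:1401.1140 — 5 statements merged into one kernel-verified Lean document; each statement's English description precedes it below -/
import Mathlib

section
/- Let B ∈ ℚ[[z]] be the formal power series satisfying B = z + z·B² (the generating function of binary trees counted by total number of nodes, B(z) = Σ_{n≥0} C_n z^{2n+1}). Then B satisfies the holonomic (linear differential) equation B(z) + (z − 4z³)·B′(z) = 2z, where B′ denotes the formal derivative. -/
open PowerSeries

/-!
Differentiating `b = x + x b²` gives `(1 - 2xb) b' = (1 + b²) x'`. The factor `1 - 2xb` squares to
the discriminant `1 - 4x²` of the quadratic equation for `b`, so multiplying by `x (1 - 2xb)` makes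
the coefficient of `b'` free of `b` without any division, and `x (1 + b²) = b` simplifies the
right-hand side. Only the Leibniz rule is used, so the argument works for any derivation of a
commutative ring.
-/

section QuadraticEquation

variable {A : Type*} [CommRing A] {x b : A}

theorem sq_one_sub_two_mul_mul_of_eq_add_mul_sq (hb : b = x + x * b ^ 2) :
    (1 - 2 * x * b) ^ 2 = 1 - 4 * x ^ 2 := by
  linear_combination -4 * x * hb

theorem add_one_sub_two_mul_mul_mul_of_eq_add_mul_sq (hb : b = x + x * b ^ 2) :
    b + (1 - 2 * x * b) * b = 2 * x := by
  linear_combination 2 * hb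

variable {R M : Type*} [CommSemiring R] [Algebra R A] [AddCommGroup M] [Module R M] [Module A M]

theorem one_sub_two_mul_mul_smul_derivation_of_eq_add_mul_sq (D : Derivation R A M)
    (hb : b = x + x * b ^ 2) :
    (1 - 2 * x * b) • D b = (1 + b ^ 2) • D x := by
  have hD : D b = D x + (x • (2 • b • D b) + b ^ 2 • D x) := by
    simpa only [map_add, D.leibniz, D.leibniz_pow, Nat.add_one_sub_one, pow_one]
      using congrArg D hb
  linear_combination (norm := module) hD

theorem binary_holonomic_general (D : Derivation R A M) (hb : b = x + x * b ^ 2) :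
    b • D x + (x - 4 * x ^ 3) • D b = (2 * x) • D x := by
  have hDb : (x - 4 * x ^ 3) • D b = ((1 - 2 * x * b) * b) • D x :=
    calc (x - 4 * x ^ 3) • D b
      _ = (x * (1 - 2 * x * b) ^ 2) • D b := by
        rw [sq_one_sub_two_mul_mul_of_eq_add_mul_sq hb]
        ring_nf
      _ = (x * (1 - 2 * x * b)) • (1 - 2 * x * b) • D b := by
        rw [sq, ← mul_assoc, mul_smul]
      _ = ((1 - 2 * x * b) * (x + x * b ^ 2)) • D x := by
        rw [one_sub_two_mul_mul_smul_derivation_of_eq_add_mul_sq D hb, smul_smul]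
        ring_nf
      _ = ((1 - 2 * x * b) * b) • D x := by rw [← hb]
  rw [hDb, ← add_smul, add_one_sub_two_mul_mul_mul_of_eq_add_mul_sq hb]

end QuadraticEquation

/-- The generating function `B` of binary trees (counted by total number of nodes),
i.e. the formal power series satisfying `B = z + z·B²`, satisfies the holonomic
equation `B(z) + (z − 4z³)·B′(z) = 2z`. -/
theorem binary_holonomic (B : PowerSeries ℚ)
    (hB : B = X + X * B ^ 2) :
    B + (X - 4 * X ^ 3) * (d⁄dX ℚ) B = 2 * X := by
  simpa only [derivative_X, smul_eq_mul, mul_one] using binary_holonomic_general (d⁄dX ℚ) hB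
end

section
/- Let B ∈ ℚ[[z]] be the formal power series satisfying B = z + z·B², and define B• = z·B′ and B⋆ = B + B•, where B′ is the formal derivative. Then B⋆ = 2z + 4z²·B•. -/
open PowerSeries

/-!
The discriminant of `x b² - b + x`, a quadratic in `b`, is `1 - 4x²`, and at a root `b` it equals
`(1 - 2xb)²`. For a derivation `D`, differentiating `b = x + x b²` gives
`(1 - 2xb) Db = (1 + b²) Dx`. Multiplying by `1 - 2xb` turns the coefficient of `Db` into the
discriminant, and that of `Dx` into `1 - b²`, because `x (1 + b²) = b`. Now take for `D` the
pointing operator `z d/dz`, which fixes `z`.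
-/

namespace BinaryTreeEquation

variable {A : Type*} [CommRing A] {x b : A}

theorem sq_one_sub_two_mul_mul (hb : b = x + x * b ^ 2) :
    (1 - 2 * x * b) ^ 2 = 1 - 4 * x ^ 2 := by
  linear_combination -4 * x * hb

variable {R M : Type*} [CommSemiring R] [Algebra R A] [AddCommGroup M] [Module A M] [Module R M]

theorem one_sub_two_mul_mul_smul_derivation (D : Derivation R A M) (hb : b = x + x * b ^ 2) :
    (1 - 2 * x * b) • D b = (1 + b ^ 2) • D x := by
  rw [sub_smul, one_smul, sub_eq_iff_eq_add]
  calc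
    D b = D (x + x * b ^ 2) := congrArg D hb
    _ = D x + (x • 2 • b • D b + b ^ 2 • D x) := by
      simp only [map_add, Derivation.leibniz, Derivation.leibniz_pow, Nat.add_one_sub_one, pow_one]
    _ = (1 + b ^ 2) • D x + (2 * x * b) • D b := by module

theorem one_sub_four_mul_sq_smul_derivation (D : Derivation R A M) (hb : b = x + x * b ^ 2) :
    (1 - 4 * x ^ 2) • D b = (1 - b ^ 2) • D x := by
  have hcoeff : (1 - 2 * x * b) * (1 + b ^ 2) = 1 - b ^ 2 := by
    linear_combination 2 * b * hb
  rw [← sq_one_sub_two_mul_mul hb, sq, mul_smul, one_sub_two_mul_mul_smul_derivation D hb,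
    smul_smul, hcoeff]

end BinaryTreeEquation

theorem binary_pointed_identity_general {R A : Type*} [CommSemiring R] [CommRing A] [Algebra R A]
    {x b : A} (θ : Derivation R A A) (hθ : θ x = x) (hb : b = x + x * b ^ 2) :
    b + θ b = 2 * x + 4 * x ^ 2 * θ b := by
  have h : (1 - 4 * x ^ 2) * θ b = (1 - b ^ 2) * x := by
    simpa only [hθ, smul_eq_mul] using
      BinaryTreeEquation.one_sub_four_mul_sq_smul_derivation θ hb
  linear_combination h + hb

/-- For the generating function `B` of binary trees (`B = z + z·B²`), with
`B• = z·B′` and `B⋆ = B + B•`, one has `B⋆ = 2z + 4z²·B•`. -/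
theorem binary_pointed_identity (B : PowerSeries ℚ)
    (hB : B = X + X * B ^ 2) :
    B + X * (d⁄dX ℚ) B = 2 * X + 4 * X ^ 2 * (X * (d⁄dX ℚ) B) :=
  binary_pointed_identity_general ((X : ℚ⟦X⟧) • d⁄dX ℚ) (by simp) hB
end

section
/- Let M ∈ ℚ[[z]] be the formal power series satisfying M = z + z·M + z·M², and define M• = z·M′ and M⋆ = M + M•, where M′ is the formal derivative. Then M⋆ = 2z + z·M⋆ + z·M• + 3z²·M•. -/
open PowerSeries

/-!
The operator `θ = z · d/dz` is a derivation with `θ z = z`. Applying it to the quadratic equation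
`z M² + (z - 1) M + z = 0` gives `(2 z M + z - 1) · θ M = -M`. The square of `2 z M + z - 1` is the
discriminant `1 - 2 z - 3 z²`, so multiplying by that factor once more, instead of dividing by it,
gives a relation with polynomial coefficients, linear in `M` and `θ M`, valid over any commutative
ring.
-/

section QuadraticRoot

variable {R A N : Type*} [CommSemiring R] [CommRing A] [Algebra R A]
  [AddCommGroup N] [Module R N] [Module A N] {a b c t : A}

theorem smul_derivation_apply_of_quadratic_eq_zero (D : Derivation R A N)
    (h : a * (t * t) + b * t + c = 0) :
    (2 * a * t + b) • D t = -((t * t) • D a + t • D b + D c) := by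
  have hD : D (a * (t * t) + b * t + c) = 0 := by rw [h, map_zero]
  simp only [map_add, Derivation.leibniz] at hD
  rw [← sub_eq_zero, ← hD]
  module

theorem discrim_smul_derivation_apply_of_quadratic_eq_zero (D : Derivation R A N)
    (h : a * (t * t) + b * t + c = 0) :
    discrim a b c • D t = -(2 * a * t + b) • ((t * t) • D a + t • D b + D c) := by
  rw [discrim_eq_sq_of_quadratic_eq_zero h, sq, mul_smul,
    smul_derivation_apply_of_quadratic_eq_zero D h, smul_neg, neg_smul]

end QuadraticRoot

theorem motzkin_pointed_identity_general {R A : Type*} [CommSemiring R] [CommRing A] [Algebra R A]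
    (θ : Derivation R A A) {z M : A} (hθ : θ z = z) (hM : M = z + z * M + z * M ^ 2) :
    M + θ M = 2 * z + z * (M + θ M) + z * θ M + 3 * z ^ 2 * θ M := by
  have hquad : z * (M * M) + (z - 1) * M + z = 0 := by linear_combination -hM
  have hpointed : (1 - 2 * z - 3 * z ^ 2) * θ M = 2 * z + z * M - M :=
    calc
      (1 - 2 * z - 3 * z ^ 2) * θ M = discrim z (z - 1) z * θ M := by rw [discrim]; ring
      _ = -(2 * z * M + (z - 1)) * (M * M * z + M * z + z) := by
        simpa [hθ] using discrim_smul_derivation_apply_of_quadratic_eq_zero θ hquad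
      _ = -(2 * z * M + (z - 1)) * M := by linear_combination (2 * z * M + (z - 1)) * hM
      _ = 2 * z + z * M - M := by linear_combination 2 * hM
  linear_combination hpointed

/-- For the generating function `M` of Motzkin trees (`M = z + z·M + z·M²`), with
`M• = z·M′` and `M⋆ = M + M•`, one has `M⋆ = 2z + z·M⋆ + z·M• + 3z²·M•`. -/
theorem motzkin_pointed_identity (M : PowerSeries ℚ)
    (hM : M = X + X * M + X * M ^ 2) :
    M + X * (d⁄dX ℚ) M =
      2 * X + X * (M + X * (d⁄dX ℚ) M) + X * (X * (d⁄dX ℚ) M)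
        + 3 * X ^ 2 * (X * (d⁄dX ℚ) M) := by
  have hX : ((X : ℚ⟦X⟧) • d⁄dX ℚ) X = X := by simp
  simpa using motzkin_pointed_identity_general _ hX hM
end

section
/- The sum Σ_{k=1}^{n} k·C_k/4ᵏ is O(√n): there exists a constant c > 0 such that for all n ≥ 1, Σ_{k=1}^{n} k·C_k/4ᵏ ≤ c·√n. (This bounds the expected cost of a failed run of the rejection sampler, since the probability of failing at size 2k+1 is C_k/(2·4ᵏ) and a run failing at that size costs O(k).) -/
/-!
Put `bₖ = binom(2k, k) / 4ᵏ`. Since `(k + 1) Cₖ = binom(2k, k)`, each summand is at most `bₖ`. The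
recurrence `(2k + 2) bₖ₊₁ = (2k + 1) bₖ` says that `bₖ₊₁ = (2k + 3) bₖ₊₁ - (2k + 1) bₖ`, so that the
sum of `b₁, …, bₙ` telescopes to `(2n + 1) bₙ - 1`. By the same recurrence `(2k + 1) bₖ²` is
nonincreasing, so it stays below its initial value `1`; this gives `bₙ ≤ 1 / √(2n + 1)`, and the sum
is at most `√(2n + 1) - 1 ≤ √(2n)`.
-/

theorem sqrt_add_le_add_sqrt (x y : ℝ) : √(x + y) ≤ √x + √y := by
  have le_sq_sqrt (z : ℝ) : z ≤ √z ^ 2 := (Real.sqrt_le_left z.sqrt_nonneg).1 le_rfl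
  refine (Real.sqrt_le_left (by positivity)).2 ?_
  calc x + y ≤ √x ^ 2 + √y ^ 2 := add_le_add (le_sq_sqrt x) (le_sq_sqrt y)
    _ ≤ (√x + √y) ^ 2 := pow_add_pow_le x.sqrt_nonneg y.sqrt_nonneg two_ne_zero

theorem mul_catalan_le_centralBinom (k : ℕ) : k * catalan k ≤ k.centralBinom :=
  calc k * catalan k ≤ (k + 1) * catalan k := Nat.mul_le_mul_right _ k.le_succ
    _ = k.centralBinom := succ_mul_catalan_eq_centralBinom k

theorem centralBinom_succ_div_four_pow (n : ℕ) :
    ((n + 1).centralBinom : ℝ) / 4 ^ (n + 1) =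
      (2 * n + 1) / (2 * n + 2) * (n.centralBinom / 4 ^ n) := by
  have recurrence : ((n : ℝ) + 1) * (n + 1).centralBinom = 2 * (2 * n + 1) * n.centralBinom :=
    mod_cast n.succ_mul_centralBinom_succ
  rw [pow_succ]
  field_simp
  linear_combination 2 * recurrence

theorem sum_Icc_centralBinom_div_four_pow (n : ℕ) :
    ∑ k ∈ Finset.Icc 1 n, (k.centralBinom : ℝ) / 4 ^ k =
      (2 * n + 1) * (n.centralBinom / 4 ^ n) - 1 := by
  induction n with
  | zero => simp
  | succ n ih =>
    rw [Finset.sum_Icc_succ_top n.succ_pos, ih, centralBinom_succ_div_four_pow]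
    push_cast
    field_simp
    ring

theorem antitone_two_mul_add_one_mul_sq_centralBinom_div_four_pow :
    Antitone fun n : ℕ ↦ (2 * n + 1) * ((n.centralBinom : ℝ) / 4 ^ n) ^ 2 := by
  refine antitone_nat_of_succ_le fun n ↦ ?_
  have factor_le : (2 * (n + 1 : ℕ) + 1) * ((2 * n + 1) / (2 * n + 2)) ^ 2 ≤ (2 * n + 1 : ℝ) := by
    rw [div_pow, mul_div_assoc', div_le_iff₀ (by positivity)]
    push_cast
    calc (2 * (n + 1) + 1) * (2 * n + 1) ^ 2
        = (2 * n + 1) * ((2 * n + 2) ^ 2 - 1 : ℝ) := by ring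
      _ ≤ (2 * n + 1) * (2 * n + 2) ^ 2 := by gcongr; exact sub_le_self _ zero_le_one
  rw [centralBinom_succ_div_four_pow, mul_pow, ← mul_assoc]
  exact mul_le_mul_of_nonneg_right factor_le (sq_nonneg _)

theorem centralBinom_div_four_pow_le_one_div_sqrt (n : ℕ) :
    (n.centralBinom : ℝ) / 4 ^ n ≤ 1 / √(2 * n + 1) := by
  have mul_sq_le : (2 * n + 1) * ((n.centralBinom : ℝ) / 4 ^ n) ^ 2 ≤ 1 := by
    simpa using antitone_two_mul_add_one_mul_sq_centralBinom_div_four_pow n.zero_le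
  rw [one_div, ← Real.sqrt_inv, ← one_div]
  exact Real.le_sqrt_of_sq_le ((le_div_iff₀' (by positivity)).2 mul_sq_le)

theorem sum_Icc_centralBinom_div_four_pow_le_sqrt (n : ℕ) :
    ∑ k ∈ Finset.Icc 1 n, (k.centralBinom : ℝ) / 4 ^ k ≤ √(2 * n) :=
  calc ∑ k ∈ Finset.Icc 1 n, (k.centralBinom : ℝ) / 4 ^ k
      = (2 * n + 1) * (n.centralBinom / 4 ^ n) - 1 := sum_Icc_centralBinom_div_four_pow n
    _ ≤ (2 * n + 1) * (1 / √(2 * n + 1)) - 1 := by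
        gcongr ?_ * ?_ - _
        exact centralBinom_div_four_pow_le_one_div_sqrt n
    _ = √(2 * n + 1) - 1 := by rw [mul_one_div, Real.div_sqrt]
    _ ≤ √(2 * n) := by
        rw [sub_le_iff_le_add]
        simpa using sqrt_add_le_add_sqrt (2 * n) 1

/-- The sum `Σ_{k=1}^{n} k·Cₖ/4ᵏ` is `O(√n)`: there is a constant `c > 0` such that
for all `n ≥ 1`, `Σ_{k=1}^{n} k·Cₖ/4ᵏ ≤ c·√n`, where `Cₖ` is the `k`-th Catalan
number. -/
theorem sum_catalan_bound :
    ∃ c : ℝ, 0 < c ∧ ∀ n : ℕ, 1 ≤ n →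
      ∑ k ∈ Finset.Icc 1 n, (k * catalan k : ℝ) / 4 ^ k ≤ c * Real.sqrt n := by
  refine ⟨√2, by positivity, fun n _ ↦ ?_⟩
  calc ∑ k ∈ Finset.Icc 1 n, (k * catalan k : ℝ) / 4 ^ k
      ≤ ∑ k ∈ Finset.Icc 1 n, (k.centralBinom : ℝ) / 4 ^ k := by
        gcongr with k
        exact mod_cast mul_catalan_le_centralBinom k
    _ ≤ √(2 * n) := sum_Icc_centralBinom_div_four_pow_le_sqrt n
    _ = √2 * √n := Real.sqrt_mul zero_le_two _
end

section
/- (Core estimate of Theorem 2.) The average number of extra random bits consumed by the efficient binary-tree sampler satisfies Σ_{i=0}^{n−1} ⌊log₂(2i+1)⌋/(2i+2) = (log n)²/(4·log 2) + o((log n)²) as n → ∞, where log denotes the natural logarithm. Consequently the total expected number of random bits used by the sampler for a tree with 2n+1 nodes is 2n + (log n)²/(4·log 2) + o((log n)²). -/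
open Filter

/-!
The number of bits `⌊log₂ (2i+1)⌋` is `⌈log₂ (i+1)⌉`, so with `x = i + 1` the `i`-th summand is
asymptotic to `log x / (2 x log 2)`. The difference `log x ^ 2 - log (x - 1) ^ 2` is asymptotic to
`2 log x / x`, so the summands are asymptotic to the increments of `(log n) ^ 2 / (4 log 2)`, and
the Stolz–Cesàro theorem transfers this to the sums.
-/

open Asymptotics Topology

lemma natLog_mul_add_one (b n : ℕ) : Nat.log b (b * n + 1) = Nat.clog b (n + 1) := by
  obtain hb | hb := le_or_gt b 1
  · rw [Nat.log_of_left_le_one hb, Nat.clog_of_left_le_one hb]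
  · refine eq_of_forall_ge_iff fun k ↦ ?_
    have hpow : b * n + 1 < b * b ^ k ↔ n + 1 ≤ b ^ k :=
      ⟨fun h ↦ lt_of_mul_lt_mul_left (Nat.lt_of_succ_lt h) b.zero_le, fun h ↦ by nlinarith⟩
    rw [← Nat.lt_succ_iff, Nat.log_lt_iff_lt_pow hb (Nat.succ_ne_zero _),
      Nat.clog_le_iff_le_pow hb, pow_succ', hpow]

/-- The **Stolz–Cesàro theorem**, in terms of asymptotic equivalence. -/
theorem isEquivalent_sum_range_of_isEquivalent_sub {f u : ℕ → ℝ} (hmono : Monotone u)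
    (hu : Tendsto u atTop atTop) (hf : f ~[atTop] fun n ↦ u (n + 1) - u n) :
    (fun n ↦ ∑ i ∈ Finset.range n, f i) ~[atTop] u := by
  have hsub : (fun n ↦ u n - u 0) ~[atTop] u :=
    IsEquivalent.refl.sub_isLittleO
      (isLittleO_const_left.2 (.inr (tendsto_norm_atTop_atTop.comp hu)))
  have hsum : (fun n ↦ ∑ i ∈ Finset.range n, (f i - (u (i + 1) - u i)))
      =o[atTop] fun n ↦ ∑ i ∈ Finset.range n, (u (i + 1) - u i) :=
    hf.isLittleO.sum_range (fun n ↦ sub_nonneg.2 (hmono n.le_succ))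
      (by simpa only [Finset.sum_range_sub] using hsub.symm.tendsto_atTop hu)
  have hsum' : (fun n ↦ ∑ i ∈ Finset.range n, f i) ~[atTop] fun n ↦ u n - u 0 := by
    simpa only [Finset.sum_sub_distrib f, Finset.sum_range_sub] using! hsum
  exact hsum'.trans hsub

lemma isEquivalent_natClog {b : ℕ} (hb : 1 < b) :
    (fun n : ℕ ↦ (Nat.clog b n : ℝ)) ~[atTop] fun n ↦ Real.logb b n := by
  simpa only [Function.comp_def, Real.natCeil_logb_natCast] using
    isEquivalent_nat_ceil.comp_tendsto
      ((Real.tendsto_logb_atTop (Nat.one_lt_cast.2 hb)).comp tendsto_natCast_atTop_atTop)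

lemma isEquivalent_log_one_add : (fun x : ℝ ↦ Real.log (1 + x)) ~[𝓝 0] id := by
  have h : HasDerivAt (fun x : ℝ ↦ Real.log (1 + x)) 1 0 := by
    simpa using ((hasDerivAt_id (0 : ℝ)).const_add 1).log (by simp)
  simpa using! h.isLittleO

lemma isEquivalent_log_add_sub_log (y : ℝ) :
    (fun x ↦ Real.log (x + y) - Real.log x) ~[atTop] fun x ↦ y / x := by
  refine (isEquivalent_log_one_add.comp_tendsto
    (tendsto_const_nhds.div_atTop tendsto_id : Tendsto (y / ·) atTop (𝓝 0))).congr_left ?_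
  filter_upwards [eventually_gt_atTop 0, eventually_gt_atTop (-y)] with x hx hxy
  rw [← Real.log_div (by linarith) hx.ne', add_div, div_self hx.ne', Function.comp_apply]

lemma isEquivalent_log_add_add_log (y : ℝ) :
    (fun x ↦ Real.log (x + y) + Real.log x) ~[atTop] fun x ↦ 2 * Real.log x := by
  have h : (fun x ↦ Real.log (x + y) - Real.log x) =o[atTop] fun x ↦ 2 * Real.log x :=
    (Real.tendsto_log_comp_add_sub_log y).isBigO_one ℝ |>.trans_isLittleO
      (Real.isLittleO_const_log_atTop.const_mul_right two_ne_zero)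
  refine (h.add_isEquivalent IsEquivalent.refl).congr_left (.of_forall fun x ↦ ?_)
  simp only [Pi.add_apply]
  ring

lemma isEquivalent_log_sq_add_sub_log_sq (y : ℝ) :
    (fun x ↦ Real.log (x + y) ^ 2 - Real.log x ^ 2) ~[atTop] fun x ↦ 2 * y * (Real.log x / x) := by
  convert! (isEquivalent_log_add_add_log y).mul (isEquivalent_log_add_sub_log y) using 2 with x x
  · exact sq_sub_sq _ _
  · simp only [Pi.mul_apply]
    ring

lemma monotone_log_natCast : Monotone fun n : ℕ ↦ Real.log n :=
  monotone_nat_of_le_succ fun n ↦ by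
    obtain rfl | hn := n.eq_zero_or_pos
    · simp
    · gcongr
      exact n.le_succ

lemma isEquivalent_natClog_div {b : ℕ} (hb : 1 < b) :
    (fun n : ℕ ↦ (Nat.clog b n : ℝ) / n)
      ~[atTop] fun n ↦ (Real.log n ^ 2 - Real.log (n - 1) ^ 2) / (2 * Real.log b) := by
  have hclog : (fun n : ℕ ↦ (Nat.clog b n : ℝ) / n) ~[atTop] fun n ↦ Real.logb b n / n :=
    (isEquivalent_natClog hb).div IsEquivalent.refl
  have hlog : (fun n : ℕ ↦ Real.log n ^ 2 - Real.log (n - 1) ^ 2)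
      ~[atTop] fun n ↦ 2 * (Real.log n / n) := by
    simpa [Function.comp_def, ← sub_eq_add_neg] using
      ((isEquivalent_log_sq_add_sub_log_sq (-1)).comp_tendsto tendsto_natCast_atTop_atTop).neg
  have hlogb : (fun n : ℕ ↦ Real.logb b n / n) =
      fun n : ℕ ↦ 2 * (Real.log n / n) / (2 * Real.log b) := by
    ext n
    rw [mul_div_mul_left _ _ two_ne_zero, div_right_comm, Real.log_div_log]
  rw [hlogb] at hclog
  exact hclog.trans (hlog.symm.div IsEquivalent.refl)

theorem isEquivalent_sum_natClog_div {b : ℕ} (hb : 1 < b) :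
    (fun n : ℕ ↦ ∑ i ∈ Finset.range n, (Nat.clog b (i + 1) : ℝ) / (i + 1))
      ~[atTop] fun n ↦ Real.log n ^ 2 / (2 * Real.log b) := by
  have hb' : 0 < 2 * Real.log b := mul_pos two_pos (Real.log_pos (Nat.one_lt_cast.2 hb))
  have hlog : Tendsto (fun n : ℕ ↦ Real.log n) atTop atTop :=
    Real.tendsto_log_atTop.comp tendsto_natCast_atTop_atTop
  refine isEquivalent_sum_range_of_isEquivalent_sub (fun m n hmn ↦ ?_)
    (((tendsto_pow_atTop two_ne_zero).comp hlog).atTop_div_const hb') ?_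
  · have := Real.log_natCast_nonneg m
    have := monotone_log_natCast hmn
    gcongr
  · simpa [Function.comp_def, sub_div] using
      (isEquivalent_natClog_div hb).comp_tendsto (tendsto_add_atTop_nat 1)

/-- (Core estimate of Theorem 2.)  The average number of extra random bits consumed
by the efficient binary-tree sampler satisfies
`Σ_{i=0}^{n−1} ⌊log₂(2i+1)⌋/(2i+2) = (log n)²/(4·log 2) + o((log n)²)` as `n → ∞`
(`log` denotes the natural logarithm and `⌊log₂ m⌋ = Nat.log 2 m`).  Consequently the
total expected number of random bits used for a tree with `2n+1` nodes is
`2n + (log n)²/(4·log 2) + o((log n)²)`. -/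
theorem expected_random_bits :
    (fun n : ℕ =>
        (∑ i ∈ Finset.range n, (Nat.log 2 (2 * i + 1) : ℝ) / (2 * i + 2))
          - (Real.log n) ^ 2 / (4 * Real.log 2))
      =o[atTop] (fun n : ℕ => (Real.log n) ^ 2)
    ∧ (fun n : ℕ =>
        (2 * n + ∑ i ∈ Finset.range n, (Nat.log 2 (2 * i + 1) : ℝ) / (2 * i + 2))
          - (2 * n + (Real.log n) ^ 2 / (4 * Real.log 2)))
      =o[atTop] (fun n : ℕ => (Real.log n) ^ 2) := by
  have hterm (i : ℕ) : (Nat.log 2 (2 * i + 1) : ℝ) / (2 * i + 2) =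
      2⁻¹ * ((Nat.clog 2 (i + 1) : ℝ) / (i + 1)) := by
    rw [natLog_mul_add_one]
    field_simp
  have hequiv : (fun n : ℕ ↦ ∑ i ∈ Finset.range n, (Nat.log 2 (2 * i + 1) : ℝ) / (2 * i + 2))
      ~[atTop] fun n ↦ Real.log n ^ 2 / (4 * Real.log 2) := by
    simp only [hterm, ← Finset.mul_sum]
    convert! IsEquivalent.refl.mul (isEquivalent_sum_natClog_div one_lt_two) using 2 with n
    simp only [Pi.mul_apply, Nat.cast_ofNat]
    ring
  have hbound : (fun n : ℕ ↦ Real.log n ^ 2 / (4 * Real.log 2)) =O[atTop]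
      fun n : ℕ ↦ Real.log n ^ 2 := by
    simpa only [div_eq_inv_mul] using isBigO_const_mul_self _ _ _
  have h := hequiv.isLittleO.trans_isBigO hbound
  exact ⟨h, by simpa only [add_sub_add_left_eq_sub] using! h⟩
end
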